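/- Let f : C_n → {0,1} and define f̃ : R^n → {−1,1} by f̃(x) = 2 f(sign^n(x)) − 1. Then for all i, j ∈ [n] with i ≠ j, ∫_{R^n} x_i x_j f̃(x) dγ(x) = (2/π) · ∫_{C_n} x_i x_j (2 f(x) − 1) dμ(x), and for i = j, ∫_{R^n} (x_i^2 − 1) f̃(x) dγ(x) = 0. -/

import Mathlib

/-!
Both integrands are, on each open orthant, a constant times a product of one-variable functions.
Summing over orthants and applying Fubini (`integral_prod_mul_sign`) reduces everything to the
one-dimensional integrals over the two half-lines (`halfInt`): for the standard Gaussian, `1`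
integrates to `1 / 2` and `t ^ 2 - 1` to `0` on each half-line, by reflection symmetry together
with the total mass and the variance, while `t` integrates to `±1 / √(2π)`. For `i ≠ j` the orthant
`σ` then contributes `2 f(σ) - 1` times
`σᵢ σⱼ (1 / √(2π))² (1 / 2) ^ (n - 2) = (2 / π) σᵢ σⱼ / 2 ^ n`,
and in the diagonal case every orthant contributes `0`.
-/

open MeasureTheory ProbabilityTheory

noncomputable section

/-- The standard Gaussian measure on `ℝⁿ`. -/
def stdGaussian (n : ℕ) : Measure (Fin n → ℝ) := Measure.pi fun _ => gaussianReal 0 1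

/-- Expectation with respect to the uniform measure on the discrete cube `{-1,1}^n`,
modeled as `Fin n → Bool` (`true ↔ 1`, `false ↔ -1`). -/
def cubeE (n : ℕ) (f : (Fin n → Bool) → ℝ) : ℝ :=
  (∑ σ : Fin n → Bool, f σ) / 2 ^ n

/-- `f` is Boolean, i.e. takes values in `{0,1}`. -/
def BoolValued (n : ℕ) (f : (Fin n → Bool) → ℝ) : Prop := ∀ σ, f σ = 0 ∨ f σ = 1

/-- The `±1` value represented by a cube coordinate. -/
def bval (b : Bool) : ℝ := if b then 1 else -1

/-- `f̃(x) = 2 f(signⁿ(x)) - 1`, where `sign(s) = 1` if `s > 0` and `-1` otherwise. -/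
def tilde (n : ℕ) (f : (Fin n → Bool) → ℝ) (x : Fin n → ℝ) : ℝ :=
  2 * f (fun i => decide (0 < x i)) - 1

/-- The integral of `g` against the one-dimensional standard Gaussian, restricted to the half-line
on which the sign is `b`. -/
def halfInt (g : ℝ → ℝ) (b : Bool) : ℝ :=
  ∫ t, g t * (if decide (0 < t) = b then 1 else 0) ∂gaussianReal 0 1

lemma integrable_half {g : ℝ → ℝ} (hg : Integrable g (gaussianReal 0 1)) (b : Bool) :
    Integrable (fun t => g t * (if decide (0 < t) = b then (1 : ℝ) else 0))
      (gaussianReal 0 1) := by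
  refine hg.mul_bdd (c := 1) ?_ (ae_of_all _ fun t => ?_)
  · refine Measurable.aestronglyMeasurable (Measurable.ite ?_ measurable_const measurable_const)
    have h : Measurable fun t : ℝ => decide (0 < t) :=
      measurable_to_bool (by
        convert! (measurableSet_Ioi : MeasurableSet (Set.Ioi (0 : ℝ))) using 1
        ext t
        simp)
    exact h (measurableSet_singleton b)
  · split_ifs <;> simp

/-- Decomposing over orthants: a product of one-variable functions times a function of the sign
pattern integrates to a sum over sign patterns of products of half-line integrals. -/
lemma integral_prod_mul_sign (n : ℕ) (g : Fin n → ℝ → ℝ)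
    (hg : ∀ k, Integrable (g k) (gaussianReal 0 1)) (F : (Fin n → Bool) → ℝ) :
    (∫ x, (∏ k, g k (x k)) * F (fun k => decide (0 < x k)) ∂stdGaussian n) =
      ∑ σ : Fin n → Bool, F σ * ∏ k, halfInt (g k) (σ k) := by
  have key : ∀ x : Fin n → ℝ, (∏ k, g k (x k)) * F (fun k => decide (0 < x k)) =
      ∑ σ : Fin n → Bool,
        F σ * ∏ k, g k (x k) * (if decide (0 < x k) = σ k then (1 : ℝ) else 0) := by
    intro x
    rw [Finset.sum_eq_single (fun k => decide (0 < x k))]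
    · simp [mul_comm]
    · intro σ _ hσ
      obtain ⟨k, hk⟩ := Function.ne_iff.mp hσ
      rw [Finset.prod_eq_zero (Finset.mem_univ k), mul_zero]
      rw [if_neg (fun h => hk h.symm), mul_zero]
    · simp
  simp_rw [key]
  rw [integral_finsetSum]
  · refine Finset.sum_congr rfl fun σ _ => ?_
    rw [integral_const_mul]
    congr 1
    exact integral_fintype_prod_eq_prod (μ := fun _ : Fin n => gaussianReal 0 1)
      (fun k t => g k t * (if decide (0 < t) = σ k then (1 : ℝ) else 0))
  · intro σ _
    exact (Integrable.fintype_prod (μ := fun _ : Fin n => gaussianReal 0 1)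
      (f := fun k t => g k t * (if decide (0 < t) = σ k then (1 : ℝ) else 0))
      fun k => integrable_half (hg k) (σ k)).const_mul _

lemma halfInt_add {g : ℝ → ℝ} (hg : Integrable g (gaussianReal 0 1)) :
    halfInt g true + halfInt g false = ∫ t, g t ∂gaussianReal 0 1 := by
  unfold halfInt
  rw [← integral_add (integrable_half hg true) (integrable_half hg false)]
  refine integral_congr_ae (ae_of_all _ fun t => ?_)
  by_cases h : 0 < t <;> simp [h]

/-- The reflection `t ↦ -t` swaps the two half-lines up to the null set `{0}`. -/
lemma halfInt_even {g : ℝ → ℝ} (he : ∀ t, g (-t) = g t) :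
    halfInt g false = halfInt g true := by
  unfold halfInt
  have hm : (gaussianReal 0 1).map (MeasurableEquiv.neg ℝ) = gaussianReal 0 1 := by
    simpa using gaussianReal_map_neg (μ := 0) (v := 1)
  conv_lhs => rw [← hm]
  rw [integral_map_equiv]
  have h0 : ∀ᵐ t ∂gaussianReal 0 1, t ≠ 0 := by
    have := nullSingletonClass_gaussianReal (μ := 0) (v := 1) one_ne_zero
    exact Measure.ae_ne _ 0
  refine integral_congr_ae (h0.mono fun t ht => ?_)
  rcases lt_or_gt_of_ne ht with h | h
  · simp [he, h, not_lt.mpr h.le]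
  · simp [he, h, not_lt.mpr h.le]

lemma halfInt_of_even {g : ℝ → ℝ} (hg : Integrable g (gaussianReal 0 1))
    (he : ∀ t, g (-t) = g t) (b : Bool) :
    halfInt g b = (∫ t, g t ∂gaussianReal 0 1) / 2 := by
  have h1 := halfInt_add hg
  have h2 := halfInt_even he
  cases b <;> linarith

lemma halfInt_one (b : Bool) : halfInt (fun _ => 1) b = 1 / 2 := by
  rw [halfInt_of_even (integrable_const _) (fun _ => rfl)]
  simp

lemma integrable_hermite : Integrable (fun t : ℝ => t ^ 2 - 1) (gaussianReal 0 1) :=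
  (memLp_id_gaussianReal (μ := 0) (v := 1) 2).integrable_sq.sub (integrable_const _)

lemma integral_hermite : ∫ t : ℝ, (t ^ 2 - 1) ∂gaussianReal 0 1 = 0 := by
  have hv := variance_eq_sub (memLp_id_gaussianReal (μ := 0) (v := 1) 2)
  rw [variance_id_gaussianReal] at hv
  have hs := (memLp_id_gaussianReal (μ := 0) (v := 1) 2).integrable_sq
  simp only [id] at hs
  rw [integral_sub hs (integrable_const _)]
  simp at hv ⊢
  linarith

lemma halfInt_hermite (b : Bool) : halfInt (fun t => t ^ 2 - 1) b = 0 := by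
  rw [halfInt_of_even integrable_hermite (fun t => by ring), integral_hermite, zero_div]

lemma integrable_id_gauss : Integrable (fun t : ℝ => t) (gaussianReal 0 1) :=
  (memLp_id_gaussianReal (μ := 0) (v := 1) 1).integrable le_rfl

lemma halfInt_id (b : Bool) : halfInt (fun t => t) b = bval b / Real.sqrt (2 * Real.pi) := by
  have ht : halfInt (fun t => t) true = 1 / Real.sqrt (2 * Real.pi) := by
    unfold halfInt
    rw [integral_gaussianReal_eq_integral_smul one_ne_zero]
    have h : ∀ t : ℝ, gaussianPDFReal 0 1 t • (t * (if decide (0 < t) = true then (1 : ℝ) else 0))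
        = (Set.Ioi (0 : ℝ)).indicator
          (fun t => (Real.sqrt (2 * Real.pi))⁻¹ * (t ^ (1 : ℝ) * Real.exp (-(1 / 2) * t ^ 2))) t := by
      intro t
      by_cases h : 0 < t
      · simp [h, gaussianPDFReal, Set.indicator]
        ring_nf
      · simp [h, Set.indicator]
    simp_rw [h]
    rw [integral_indicator measurableSet_Ioi, integral_const_mul]
    have := integral_rpow_mul_exp_neg_mul_rpow (p := 2) (q := 1) (b := 1 / 2)
      (by norm_num) (by norm_num) (by norm_num)
    simp only [Real.rpow_two] at this
    rw [this]
    norm_num [Real.rpow_neg_one]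
  have ha := halfInt_add integrable_id_gauss
  have hz : ∫ t : ℝ, t ∂gaussianReal 0 1 = 0 := integral_id_gaussianReal
  rw [hz, ht] at ha
  cases b
  · simp only [bval, Bool.false_eq_true, if_false]
    rw [neg_div]
    linarith
  · simp [ht, bval]

/-- For Boolean `f : Cₙ → {0,1}`: for `i ≠ j`,
`∫ xᵢxⱼ f̃(x) dγ(x) = (2/π) ∫ xᵢxⱼ (2f(x) - 1) dμ(x)`, and for every `i`,
`∫ (xᵢ² - 1) f̃(x) dγ(x) = 0`. -/
theorem second_hermite_coefficient_of_tilde (n : ℕ)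
    (f : (Fin n → Bool) → ℝ) (hf : BoolValued n f) :
    (∀ i j : Fin n, i ≠ j →
      (∫ x, x i * x j * tilde n f x ∂stdGaussian n) =
        (2 / Real.pi) * cubeE n fun σ => bval (σ i) * bval (σ j) * (2 * f σ - 1)) ∧
    (∀ i : Fin n, (∫ x, (x i ^ 2 - 1) * tilde n f x ∂stdGaussian n) = 0) := by
  have hpi : Real.sqrt (2 * Real.pi) ^ 2 = 2 * Real.pi := Real.sq_sqrt (by positivity)
  have hpi0 : Real.sqrt (2 * Real.pi) ≠ 0 := by positivity
  refine ⟨fun i j hij => ?_, fun i => ?_⟩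
  · have h := integral_prod_mul_sign n (fun k t => if k = i ∨ k = j then t else 1)
      (fun k => by
        by_cases hk : k = i ∨ k = j
        · simpa [hk] using integrable_id_gauss
        · simp [hk])
      (fun σ => 2 * f σ - 1)
    have hprod : ∀ c : Fin n → ℝ,
        (∏ k, if k = i ∨ k = j then c k else 1) = c i * c j := by
      intro c
      rw [← Finset.prod_pair hij, ← Finset.prod_filter]
      congr 1
      ext k
      simp
    simp_rw [hprod] at h
    simp only [tilde]
    rw [h, cubeE, Finset.sum_div, Finset.mul_sum]
    refine Finset.sum_congr rfl fun σ _ => ?_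
    -- Factoring `1 / 2` out of every coordinate leaves a product over the pair `{i, j}`.
    have hk : ∀ k, halfInt (fun t => if k = i ∨ k = j then t else 1) (σ k) =
        (1 / 2) * (if k = i ∨ k = j then 2 * bval (σ k) / Real.sqrt (2 * Real.pi) else 1) := by
      intro k
      by_cases hk : k = i ∨ k = j
      · simp only [hk, if_true, halfInt_id]
        ring
      · simp only [hk, if_false, halfInt_one]
        ring
    simp_rw [hk]
    rw [Finset.prod_mul_distrib, hprod fun k => 2 * bval (σ k) / Real.sqrt (2 * Real.pi)]
    simp only [Finset.prod_const, Finset.card_univ, Fintype.card_fin, one_div, inv_pow]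
    have h4 : 2 * bval (σ i) / Real.sqrt (2 * Real.pi) *
        (2 * bval (σ j) / Real.sqrt (2 * Real.pi)) =
        2 / Real.pi * (bval (σ i) * bval (σ j)) := by
      rw [div_mul_div_comm, ← sq, hpi]
      field_simp
    rw [h4]
    ring
  · have h := integral_prod_mul_sign n (fun k t => if k = i then t ^ 2 - 1 else 1)
      (fun k => by
        by_cases hk : k = i
        · simpa [hk] using integrable_hermite
        · simp [hk])
      (fun σ => 2 * f σ - 1)
    simp only [Finset.prod_ite_eq', Finset.mem_univ, if_true] at h
    simp only [tilde]
    rw [h]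
    refine Finset.sum_eq_zero fun σ _ => ?_
    rw [Finset.prod_eq_zero (Finset.mem_univ i), mul_zero]
    simpa using halfInt_hermite (σ i)

end
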